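/- Assume the set 𝒵 of ℝ^C-valued random variables satisfies: for all t > 0, Z ∈ 𝒵 if and only if tZ ∈ 𝒵. Let g(z) = zᵀAz for a positive definite matrix A ∈ ℝ^{C×C}, and let l^MUH(z,y) = (1/C)Σ_i z_i − z_y. Then the regularized loss l^MUH + g is robust to uniform label noise: for every Z̄* ∈ argmin_{Z∈𝒵} E[l^MUH(Z,Ȳ) + g(Z)], there exists Z* ∈ argmin_{Z∈𝒵} E[l^MUH(Z,Y) + g(Z)] with pred(Z̄*) = pred(Z*) almost surely. Concretely, with λ = 1/(1 − ρC/(C−1)), the random variable λZ̄* is such a minimizer of the clean regularized risk. -/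

import Mathlib

open MeasureTheory Matrix

/-- `Ybar` is a uniformly noisy version of `Y` at noise level `ρ` (expectation form of
`P(Ȳ=i | Y,X) = ρ/(C−1)` for `i ≠ Y` and `1−ρ` for `i = Y`). -/
def UniformLabelNoise {Ω 𝒳 : Type*} [MeasurableSpace Ω] (P : Measure Ω) (C : ℕ) (ρ : ℝ)
    (X : Ω → 𝒳) (Y Ybar : Ω → Fin C) : Prop :=
  ∀ h : 𝒳 → Fin C → ℝ,
    Integrable (fun ω => h (X ω) (Ybar ω)) P →
    Integrable (fun ω => h (X ω) (Y ω)) P →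
    (∀ i, Integrable (fun ω => h (X ω) i) P) →
    ∫ ω, h (X ω) (Ybar ω) ∂P =
      (1 - ρ) * ∫ ω, h (X ω) (Y ω) ∂P
        + (ρ / ((C : ℝ) - 1)) * ∫ ω, (∑ i : Fin C, if i = Y ω then 0 else h (X ω) i) ∂P

/-- The Multi-Category Unhinged loss `l^MUH(z,y) = (1/C)Σ_i z_i − z_y`. -/
noncomputable def lMUH (C : ℕ) (z : Fin C → ℝ) (y : Fin C) : ℝ :=
  (1 / (C : ℝ)) * ∑ i, z i - z y

/-- The set of predictions `argmax_i z_i` of an output vector `z`. -/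
def predSet (C : ℕ) (z : Fin C → ℝ) : Set (Fin C) := {i | ∀ j, z j ≤ z i}

theorem sum_lMUH {C : ℕ} (hC : C ≠ 0) (z : Fin C → ℝ) : ∑ i, lMUH C z i = 0 := by
  have : (C : ℝ) ≠ 0 := Nat.cast_ne_zero.mpr hC
  simp only [lMUH, Finset.sum_sub_distrib, Finset.sum_const, Finset.card_univ, Fintype.card_fin,
    nsmul_eq_mul]
  field_simp
  ring

theorem lMUH_smul (C : ℕ) (t : ℝ) (z : Fin C → ℝ) (y : Fin C) :
    lMUH C (t • z) y = t * lMUH C z y := by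
  simp only [lMUH, Pi.smul_apply, smul_eq_mul, ← Finset.mul_sum]
  ring

theorem predSet_smul (C : ℕ) {t : ℝ} (ht : 0 < t) (z : Fin C → ℝ) :
    predSet C (t • z) = predSet C z := by
  ext i
  simp [predSet, mul_le_mul_iff_right₀ ht]

/-- Uniform label noise multiplies the expected Multi-Category Unhinged loss by
`1 - ρC/(C-1)`, because the losses of a fixed output sum to zero over the labels. -/
theorem UniformLabelNoise.integral_lMUH {Ω 𝒳 : Type*} [MeasurableSpace Ω] {P : Measure Ω} {C : ℕ}
    {ρ : ℝ} {X : Ω → 𝒳} {Y Ybar : Ω → Fin C} (hnoise : UniformLabelNoise P C ρ X Y Ybar)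
    (hC : 2 ≤ C) (f : 𝒳 → Fin C → ℝ)
    (hYbar : Integrable (fun ω => lMUH C (f (X ω)) (Ybar ω)) P)
    (hY : Integrable (fun ω => lMUH C (f (X ω)) (Y ω)) P)
    (hi : ∀ i, Integrable (fun ω => lMUH C (f (X ω)) i) P) :
    ∫ ω, lMUH C (f (X ω)) (Ybar ω) ∂P =
      (1 - ρ * C / ((C : ℝ) - 1)) * ∫ ω, lMUH C (f (X ω)) (Y ω) ∂P := by
  have hsum (ω : Ω) : (∑ i, if i = Y ω then 0 else lMUH C (f (X ω)) i) =
      -lMUH C (f (X ω)) (Y ω) := by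
    have hsplit := Finset.add_sum_erase Finset.univ (lMUH C (f (X ω))) (Finset.mem_univ (Y ω))
    rw [sum_lMUH (by lia)] at hsplit
    rw [← Finset.add_sum_erase _ _ (Finset.mem_univ (Y ω)), if_pos rfl, Finset.sum_congr rfl
      fun i hi => if_neg (Finset.ne_of_mem_erase hi)]
    linarith
  have hC' : (2 : ℝ) ≤ C := by exact_mod_cast hC
  have hC1 : (C : ℝ) - 1 ≠ 0 := by linarith
  rw [hnoise (fun x => lMUH C (f x)) hYbar hY hi]
  simp only [hsum, integral_neg]
  field_simp
  ring

/-- Theorem 2 of the paper: if `𝒵` is closed under positive scaling and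
`g(z) = zᵀAz` with `A` positive definite, then `l^MUH + g` is robust to uniform label
noise; concretely, for `λ = 1/(1 − ρC/(C−1))`, if `Z̄*` minimizes the noisy regularized
risk over `𝒵` then `λZ̄* ∈ 𝒵` minimizes the clean regularized risk and has almost surely
the same predictions as `Z̄*`. -/
theorem stmt4
    {Ω 𝒳 : Type*} [MeasurableSpace Ω] [MeasurableSpace 𝒳]
    (P : Measure Ω) [IsProbabilityMeasure P]
    (C : ℕ) (hC : 2 ≤ C) (ρ : ℝ) (hρ0 : 0 ≤ ρ) (hρ : ρ < ((C : ℝ) - 1) / C)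
    (X : Ω → 𝒳) (Y Ybar : Ω → Fin C)
    (hX : Measurable X) (hY : Measurable Y) (hYbar : Measurable Ybar)
    (hnoise : UniformLabelNoise P C ρ X Y Ybar)
    (A : Matrix (Fin C) (Fin C) ℝ) (hA : A.PosDef)
    (g : (Fin C → ℝ) → ℝ) (hg : ∀ z, g z = z ⬝ᵥ A.mulVec z)
    (𝒵 : Set (Ω → Fin C → ℝ))
    (h𝒵 : ∀ Z ∈ 𝒵, ∃ f : 𝒳 → Fin C → ℝ, Measurable f ∧ Z = fun ω => f (X ω))
    (hscale : ∀ t : ℝ, 0 < t → ∀ Z : Ω → Fin C → ℝ, Z ∈ 𝒵 ↔ (fun ω => t • Z ω) ∈ 𝒵)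
    (hint1 : ∀ Z ∈ 𝒵, Integrable (fun ω => lMUH C (Z ω) (Ybar ω)) P)
    (hint2 : ∀ Z ∈ 𝒵, Integrable (fun ω => lMUH C (Z ω) (Y ω)) P)
    (hint3 : ∀ Z ∈ 𝒵, ∀ i, Integrable (fun ω => lMUH C (Z ω) i) P)
    (hint4 : ∀ Z ∈ 𝒵, Integrable (fun ω => g (Z ω)) P)
    (lam : ℝ) (hlam : lam = 1 / (1 - ρ * C / ((C : ℝ) - 1))) :
    ∀ Zbar ∈ 𝒵,
      (∀ W ∈ 𝒵,
        (∫ ω, lMUH C (Zbar ω) (Ybar ω) + g (Zbar ω) ∂P) ≤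
          ∫ ω, lMUH C (W ω) (Ybar ω) + g (W ω) ∂P) →
      ((fun ω => lam • Zbar ω) ∈ 𝒵 ∧
        (∀ W ∈ 𝒵,
          (∫ ω, lMUH C (lam • Zbar ω) (Y ω) + g (lam • Zbar ω) ∂P) ≤
            ∫ ω, lMUH C (W ω) (Y ω) + g (W ω) ∂P) ∧
        ∀ᵐ ω ∂P, predSet C (Zbar ω) = predSet C (lam • Zbar ω)) := by
  have hC' : (2 : ℝ) ≤ C := by exact_mod_cast hC
  set κ : ℝ := 1 - ρ * C / ((C : ℝ) - 1) with hκ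
  have hκ0 : 0 < κ := by
    rw [lt_div_iff₀ (by linarith)] at hρ
    rw [hκ, sub_pos, div_lt_one (by linarith)]
    exact hρ
  have hlam0 : 0 < lam := hlam ▸ one_div_pos.mpr hκ0
  have hlamκ : lam * κ = 1 := by rw [hlam, one_div_mul_cancel hκ0.ne']
  have hg_smul (t : ℝ) (z : Fin C → ℝ) : g (t • z) = t ^ 2 * g z := by
    simp only [hg, mulVec_smul, smul_dotProduct, dotProduct_smul, smul_eq_mul]
    ring
  have clean_smul : ∀ Z ∈ 𝒵, ∫ ω, lMUH C (lam • Z ω) (Y ω) + g (lam • Z ω) ∂P =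
      lam ^ 2 * ∫ ω, lMUH C (Z ω) (Ybar ω) + g (Z ω) ∂P := by
    intro Z hZ
    have hnoisy : ∫ ω, lMUH C (Z ω) (Ybar ω) ∂P = κ * ∫ ω, lMUH C (Z ω) (Y ω) ∂P := by
      obtain ⟨f, -, rfl⟩ := h𝒵 Z hZ
      exact hnoise.integral_lMUH hC f (hint1 _ hZ) (hint2 _ hZ) (hint3 _ hZ)
    simp only [lMUH_smul, hg_smul]
    rw [integral_add ((hint2 Z hZ).const_mul _) ((hint4 Z hZ).const_mul _),
      integral_add (hint1 Z hZ) (hint4 Z hZ), integral_const_mul, integral_const_mul, hnoisy]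
    linear_combination (-lam * ∫ ω, lMUH C (Z ω) (Y ω) ∂P) * hlamκ
  intro Zbar hZbar hmin
  refine ⟨(hscale lam hlam0 Zbar).mp hZbar, fun W hW => ?_,
    .of_forall fun ω => (predSet_smul C hlam0 _).symm⟩
  have hκW := (hscale κ hκ0 W).mp hW
  have hclean := clean_smul _ hκW
  simp only [smul_smul, hlamκ, one_smul] at hclean
  rw [clean_smul Zbar hZbar, hclean]
  exact mul_le_mul_of_nonneg_left (hmin _ hκW) (sq_nonneg lam)
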